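/- arXiv:1401.7302 — 9 statements merged into one kernel-verified Lean document; each statement's English description precedes it below -/
import Mathlib

section
/- Let V be a symplectic vector space. If L and L' are Lagrangian subspaces of V, I and I' are isotropic subspaces of V, dim I = dim I', and dim(L ∩ I) = dim(L' ∩ I'), then there exists a linear automorphism φ of V preserving the symplectic form (ω(φx, φy) = ω(x, y) for all x, y) such that φ(L) = L' and φ(I) = I'. -/
open Module

/-!
The pair `(L, I)` is put in a normal form. Choose a complement `C` of `L ⊓ I` in `I`. Since `C` is
isotropic and meets `L` trivially, it lies in an isotropic complement `M` of `L`
(`exists_isotropic_isCompl`: a maximal isotropic subspace containing `C` and disjoint from `L` is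
such a complement). The form identifies `M` with the dual of `L`, so every isomorphism
`g : L ≃ L'` extends to a symplectic map `V = L ⊕ M → L' ⊕ M' = V`, acting on `M` by the inverse
transpose of `g` (`exists_symplectic_extension`).

It remains to choose `g` so that `I` goes to `I'`. The summand `L ⊓ I` is taken care of by
`g (L ⊓ I) = L' ⊓ I'`, and the summand `C ≤ M` by `g D = D'`, where `D = L ⊓ C^⊥` and
`D' = L' ⊓ C'^⊥`, because `D'^⊥ ⊓ M' = (L' ⊔ C') ⊓ M' = C'`. As `I` is isotropic,
`L ⊓ I ≤ D ≤ L` is a flag, and its dimensions agree with those of the primed flag, so such a `g`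
exists.
-/

lemma exists_linearEquiv_extend {X X' : Type*} [AddCommGroup X] [Module ℝ X]
    [FiniteDimensional ℝ X] [AddCommGroup X'] [Module ℝ X'] [FiniteDimensional ℝ X']
    (hX : finrank ℝ X = finrank ℝ X') (P : Submodule ℝ X) (P' : Submodule ℝ X') (g : P ≃ₗ[ℝ] P') :
    ∃ G : X ≃ₗ[ℝ] X', ∀ p : P, G p = g p := by
  obtain ⟨Q, hQ⟩ := P.exists_isCompl
  obtain ⟨Q', hQ'⟩ := P'.exists_isCompl
  have h1 := Submodule.finrank_add_eq_of_isCompl hQ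
  have h2 := Submodule.finrank_add_eq_of_isCompl hQ'
  have h3 := g.finrank_eq
  let q : Q ≃ₗ[ℝ] Q' := LinearEquiv.ofFinrankEq _ _ (by omega)
  refine ⟨(Submodule.prodEquivOfIsCompl P Q hQ).symm ≪≫ₗ (g.prodCongr q) ≪≫ₗ
    Submodule.prodEquivOfIsCompl P' Q' hQ', fun p => ?_⟩
  simp

section

variable {V : Type*} [AddCommGroup V] [Module ℝ V] [FiniteDimensional ℝ V]

lemma exists_linearEquiv_extend_of_le {A A' D D' : Submodule ℝ V} (hA : A ≤ D) (hA' : A' ≤ D')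
    (hD : finrank ℝ D = finrank ℝ D') (g : A ≃ₗ[ℝ] A') :
    ∃ G : D ≃ₗ[ℝ] D', ∀ a (ha : a ∈ A), (G ⟨a, hA ha⟩ : V) = g ⟨a, ha⟩ := by
  obtain ⟨G, hG⟩ := exists_linearEquiv_extend hD (A.submoduleOf D) (A'.submoduleOf D')
    (Submodule.submoduleOfEquivOfLe hA ≪≫ₗ g ≪≫ₗ (Submodule.submoduleOfEquivOfLe hA').symm)
  refine ⟨G, fun a ha => ?_⟩
  have := hG ⟨⟨a, hA ha⟩, ha⟩
  rw [this]
  rfl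

/-- Flags of length two with equal dimensions are isomorphic. -/
lemma exists_linearEquiv_flag {A A' D D' L L' : Submodule ℝ V} (hA : A ≤ D) (hA' : A' ≤ D')
    (hDL : D ≤ L) (hDL' : D' ≤ L') (h1 : finrank ℝ A = finrank ℝ A')
    (h2 : finrank ℝ D = finrank ℝ D') (h3 : finrank ℝ L = finrank ℝ L') :
    ∃ g : L ≃ₗ[ℝ] L', (∀ x : L, (x : V) ∈ A → (g x : V) ∈ A') ∧
      (∀ y : L', (y : V) ∈ D' → (g.symm y : V) ∈ D) := by
  obtain ⟨g₁, hg₁⟩ := exists_linearEquiv_extend_of_le hA hA' h2 (LinearEquiv.ofFinrankEq _ _ h1)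
  obtain ⟨g, hg⟩ := exists_linearEquiv_extend_of_le hDL hDL' h3 g₁
  refine ⟨g, fun x hx => ?_, fun y hy => ?_⟩
  · have e := hg x (hA hx)
    have e' := hg₁ x hx
    rw [e'] at e
    exact e ▸ Subtype.property _
  · have e := hg (g₁.symm ⟨y, hy⟩) (Subtype.property _)
    simp only [Subtype.coe_eta, LinearEquiv.apply_symm_apply] at e
    have : g ⟨_, hDL (g₁.symm ⟨y, hy⟩).2⟩ = y := Subtype.ext e
    rw [← this]
    simp

lemma sup_eq_top_of_orthogonal_inf_eq_bot {ω : LinearMap.BilinForm ℝ V} (hnd : ω.Nondegenerate)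
    (halt : ω.IsAlt) {L M : Submodule ℝ V} (hL : ω.orthogonal L = L)
    (h : ω.orthogonal M ⊓ L = ⊥) : L ⊔ M = ⊤ := by
  rw [← LinearMap.BilinForm.orthogonal_orthogonal hnd halt.isRefl (L ⊔ M), eq_top_iff,
    ← LinearMap.BilinForm.orthogonal_bot (B := ω), ← h]
  refine LinearMap.BilinForm.orthogonal_le fun x hx => ⟨?_, ?_⟩
  · exact LinearMap.BilinForm.orthogonal_le le_sup_right hx
  · rw [← hL]
    exact LinearMap.BilinForm.orthogonal_le le_sup_left hx

/-- An isotropic subspace `C` disjoint from a Lagrangian `L` lies in an isotropic complement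
of `L`. -/
lemma exists_isotropic_isCompl {ω : LinearMap.BilinForm ℝ V} (hnd : ω.Nondegenerate)
    (halt : ω.IsAlt) {L C : Submodule ℝ V} (hL : ω.orthogonal L = L)
    (hC : C ≤ ω.orthogonal C) (hCL : L ⊓ C = ⊥) :
    ∃ M, C ≤ M ∧ M ≤ ω.orthogonal M ∧ IsCompl L M := by
  obtain ⟨M, ⟨hCM, hM, hML⟩, hmax⟩ := WellFounded.has_min (wellFounded_gt (α := Submodule ℝ V))
    {M | C ≤ M ∧ M ≤ ω.orthogonal M ∧ L ⊓ M = ⊥} ⟨C, le_rfl, hC, hCL⟩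
  refine ⟨M, hCM, hM, disjoint_iff.2 hML, codisjoint_iff.2 ?_⟩
  -- By maximality nothing orthogonal to `M` lies outside `L ⊔ M`.
  have key : ω.orthogonal M ≤ L ⊔ M := by
    intro v hv
    by_contra hvLM
    have hvM : v ∉ M := fun h => hvLM (Submodule.mem_sup_right h)
    refine hmax (M ⊔ Submodule.span ℝ {v}) ⟨hCM.trans le_sup_left, ?_, ?_⟩ ?_
    · intro x hx
      obtain ⟨m, hm, w, hw, rfl⟩ := Submodule.mem_sup.1 hx
      obtain ⟨c, rfl⟩ := Submodule.mem_span_singleton.1 hw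
      intro y hy
      obtain ⟨m', hm', w', hw', rfl⟩ := Submodule.mem_sup.1 hy
      obtain ⟨c', rfl⟩ := Submodule.mem_span_singleton.1 hw'
      have e1 : ω m' m = 0 := hM hm m' hm'
      have e2 : ω m' v = 0 := hv m' hm'
      have e3 : ω v m = 0 := halt.isRefl _ _ (hv m hm)
      have e4 : ω v v = 0 := halt v
      change ω (m' + c' • v) (m + c • v) = 0
      simp [e1, e2, e3, e4]
    · rw [eq_bot_iff]
      rintro x ⟨hxL, hx⟩
      obtain ⟨m, hm, w, hw, rfl⟩ := Submodule.mem_sup.1 hx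
      obtain ⟨c, rfl⟩ := Submodule.mem_span_singleton.1 hw
      by_cases hc : c = 0
      · subst hc
        rw [← hML]
        refine ⟨hxL, ?_⟩
        simpa using hm
      · refine absurd ?_ hvLM
        have : c • v ∈ L ⊔ M := by
          have := (L ⊔ M).sub_mem (Submodule.mem_sup_left hxL) (Submodule.mem_sup_right hm)
          simpa using this
        exact (Submodule.smul_mem_iff _ hc).1 this
    · refine lt_of_le_of_ne le_sup_left fun h => hvM ?_
      rw [h]
      exact Submodule.mem_sup_right (Submodule.mem_span_singleton_self v)
  refine sup_eq_top_of_orthogonal_inf_eq_bot hnd halt hL ?_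
  -- The orthogonal complement of `key` reads `M^⊥ ⊓ L ≤ M`.
  rw [eq_bot_iff, ← hML]
  rintro x ⟨hxM, hxL⟩
  refine ⟨hxL, ?_⟩
  rw [← LinearMap.BilinForm.orthogonal_orthogonal hnd halt.isRefl M]
  intro y hy
  obtain ⟨l, hl, m, hm, rfl⟩ := Submodule.mem_sup.1 (key hy)
  have e1 : ω l x = 0 := by
    rw [← hL] at hxL
    exact hxL l hl
  have e2 : ω m x = 0 := hxM m hm
  change ω (l + m) x = 0
  simp [e1, e2]

/-- The pairing `M ≃ L^*` between a Lagrangian subspace and a complement of it. -/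
lemma exists_dual_equiv {ω : LinearMap.BilinForm ℝ V} (hnd : ω.Nondegenerate) (halt : ω.IsAlt)
    {L M : Submodule ℝ V} (hL : ω.orthogonal L = L) (hLM : IsCompl L M) :
    ∃ e : M ≃ₗ[ℝ] Dual ℝ L, ∀ m l, e m l = ω m l := by
  let f : M →ₗ[ℝ] Dual ℝ L := (L.subtype.dualMap ∘ₗ ω) ∘ₗ M.subtype
  have hf : ∀ m l, f m l = ω m l := fun _ _ => rfl
  have hinj : Function.Injective f := by
    rw [injective_iff_map_eq_zero]
    intro m hm
    have hmL : (m : V) ∈ L := by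
      rw [← hL]
      intro l hl
      have : ω m l = 0 := by rw [← hf m ⟨l, hl⟩, hm]; rfl
      exact halt.isRefl _ _ this
    have : (m : V) ∈ L ⊓ M := ⟨hmL, m.2⟩
    rw [hLM.inf_eq_bot] at this
    exact Subtype.ext this
  have hdim : finrank ℝ M = finrank ℝ (Dual ℝ L) := by
    have h1 := Submodule.finrank_add_eq_of_isCompl hLM
    have h2 := LinearMap.BilinForm.finrank_orthogonal hnd L
    have h3 := Submodule.finrank_le L
    rw [hL] at h2
    rw [Subspace.dual_finrank_eq]
    omega
  exact ⟨LinearEquiv.ofInjectiveOfFinrankEq f hinj hdim, fun _ _ => rfl⟩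

/-- An isomorphism between Lagrangian subspaces extends to a symplectic automorphism mapping
one prescribed isotropic complement to another. -/
lemma exists_symplectic_extension {ω : LinearMap.BilinForm ℝ V} (hnd : ω.Nondegenerate)
    (halt : ω.IsAlt) {L L' M M' : Submodule ℝ V} (hL : ω.orthogonal L = L)
    (hL' : ω.orthogonal L' = L') (hM : M ≤ ω.orthogonal M) (hM' : M' ≤ ω.orthogonal M')
    (hLM : IsCompl L M) (hLM' : IsCompl L' M') (g : L ≃ₗ[ℝ] L') :
    ∃ φ : V ≃ₗ[ℝ] V, (∀ x y, ω (φ x) (φ y) = ω x y) ∧ (∀ l : L, φ l = g l) ∧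
      ∀ m ∈ M, φ m ∈ M' := by
  obtain ⟨e, he⟩ := exists_dual_equiv hnd halt hL hLM
  obtain ⟨e', he'⟩ := exists_dual_equiv hnd halt hL' hLM'
  let h : M ≃ₗ[ℝ] M' := e ≪≫ₗ g.symm.dualMap ≪≫ₗ e'.symm
  have hgh : ∀ (m : M) (l : L), ω (h m) (g l) = ω m l := by
    intro m l
    rw [← he', ← he]
    simp [h]
  have hhg : ∀ (l : L) (m : M), ω (g l) (h m) = ω l m := by
    intro l m
    rw [← LinearMap.IsAlt.neg halt (h m).1, ← LinearMap.IsAlt.neg halt m.1, hgh]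
  let φ : V ≃ₗ[ℝ] V := (Submodule.prodEquivOfIsCompl L M hLM).symm ≪≫ₗ (g.prodCongr h) ≪≫ₗ
    Submodule.prodEquivOfIsCompl L' M' hLM'
  have hφL : ∀ l : L, φ l = g l := fun l => by simp [φ]
  have hφM : ∀ m : M, φ m = h m := fun m => by simp [φ]
  refine ⟨φ, fun x y => ?_, hφL, fun m hm => ?_⟩
  · have hdec : ∀ x : V, ∃ (l : L) (m : M), x = l + m := fun x => by
      obtain ⟨l, hl, m, hm, h⟩ := Submodule.mem_sup.1
        (hLM.sup_eq_top ▸ Submodule.mem_top : x ∈ L ⊔ M)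
      exact ⟨⟨l, hl⟩, ⟨m, hm⟩, h.symm⟩
    obtain ⟨l, m, rfl⟩ := hdec x
    obtain ⟨k, n, rfl⟩ := hdec y
    have e1 : ω (l : V) k = 0 := hL.ge k.2 l l.2
    have e2 : ω (m : V) n = 0 := hM n.2 m m.2
    have e3 : ω (g l : V) (g k) = 0 := hL'.ge (g k).2 _ (g l).2
    have e4 : ω (h m : V) (h n) = 0 := hM' (h n).2 _ (h m).2
    simp [hφL, hφM, e1, e2, e3, e4, hgh, hhg]
  · rw [hφM ⟨m, hm⟩]
    exact Subtype.property _

lemma orthogonal_sup_eq_and_finrank {ω : LinearMap.BilinForm ℝ V} (hnd : ω.Nondegenerate)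
    {L C : Submodule ℝ V} (hL : ω.orthogonal L = L) (hCL : L ⊓ C = ⊥) :
    ω.orthogonal (L ⊔ C) = L ⊓ ω.orthogonal C ∧
    finrank ℝ ↥(L ⊓ ω.orthogonal C) + finrank ℝ C = finrank ℝ L := by
  have h : ω.orthogonal (L ⊔ C) = L ⊓ ω.orthogonal C := by
    apply le_antisymm
    · refine le_inf ?_ (LinearMap.BilinForm.orthogonal_le le_sup_right)
      conv_rhs => rw [← hL]
      exact LinearMap.BilinForm.orthogonal_le le_sup_left
    · rintro x ⟨hxL, hxC⟩ y hy
      obtain ⟨l, hl, c, hc, rfl⟩ := Submodule.mem_sup.1 hy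
      have e1 : ω l x = 0 := hL.ge hxL l hl
      have e2 : ω c x = 0 := hxC c hc
      change ω (l + c) x = 0
      simp [e1, e2]
  refine ⟨h, ?_⟩
  have h1 := LinearMap.BilinForm.finrank_orthogonal hnd (L ⊔ C)
  have h2 := Submodule.finrank_sup_add_finrank_inf_eq L C
  have h3 := LinearMap.BilinForm.finrank_orthogonal hnd L
  have h4 := Submodule.finrank_le L
  have h5 := Submodule.finrank_le (L ⊔ C)
  rw [hCL, finrank_bot] at h2
  rw [h] at h1
  rw [hL] at h3
  omega

/-- Decomposition `I = (L ⊓ I) ⊕ C` with `C` inside an isotropic complement `M` of `L`. -/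
lemma exists_adapted_complement {ω : LinearMap.BilinForm ℝ V} (hnd : ω.Nondegenerate)
    (halt : ω.IsAlt) {L I : Submodule ℝ V} (hL : ω.orthogonal L = L) (hI : I ≤ ω.orthogonal I) :
    ∃ C M : Submodule ℝ V, (L ⊓ I) ⊔ C = I ∧ L ⊓ C = ⊥ ∧ C ≤ M ∧ M ≤ ω.orthogonal M ∧
      IsCompl L M ∧ L ⊓ I ≤ L ⊓ ω.orthogonal C ∧
      finrank ℝ ↥(L ⊓ I) + finrank ℝ C = finrank ℝ I := by
  obtain ⟨Q, hQ⟩ := (L ⊓ I).exists_isCompl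
  have hsup : (L ⊓ I) ⊔ (Q ⊓ I) = I := by
    rw [← sup_inf_assoc_of_le Q (inf_le_right : L ⊓ I ≤ I), hQ.sup_eq_top, top_inf_eq]
  have hbot : L ⊓ (Q ⊓ I) = ⊥ := by
    rw [← hQ.inf_eq_bot]
    ac_rfl
  have hCI : Q ⊓ I ≤ I := inf_le_right
  obtain ⟨M, hCM, hM, hLM⟩ := exists_isotropic_isCompl hnd halt hL
    (hCI.trans (hI.trans (LinearMap.BilinForm.orthogonal_le hCI))) hbot
  refine ⟨Q ⊓ I, M, hsup, hbot, hCM, hM, hLM, le_inf inf_le_left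
    (inf_le_right.trans (hI.trans (LinearMap.BilinForm.orthogonal_le hCI))), ?_⟩
  have h := Submodule.finrank_sup_add_finrank_inf_eq (L ⊓ I) (Q ⊓ I)
  have hb : (L ⊓ I) ⊓ (Q ⊓ I) = ⊥ :=
    eq_bot_iff.2 ((inf_le_inf_right _ inf_le_left).trans hbot.le)
  rw [hsup, hb, finrank_bot] at h
  omega

end

/-- In a symplectic vector space `(V, ω)`, a pair consisting of a Lagrangian subspace and an
isotropic subspace is characterized up to symplectomorphism by the dimensions of the isotropic
subspace and of its intersection with the Lagrangian: if `L, L'` are Lagrangian, `I, I'` are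
isotropic, `dim I = dim I'` and `dim (L ⊓ I) = dim (L' ⊓ I')`, then there is a linear
automorphism of `V` preserving `ω` carrying `L` to `L'` and `I` to `I'`. -/
theorem lagrangian_isotropic_pair_classification
    (V : Type*) [AddCommGroup V] [Module ℝ V] [FiniteDimensional ℝ V]
    (ω : LinearMap.BilinForm ℝ V) (hnd : ω.Nondegenerate) (halt : ω.IsAlt)
    (L L' I I' : Submodule ℝ V)
    (hL : ω.orthogonal L = L) (hL' : ω.orthogonal L' = L')
    (hI : I ≤ ω.orthogonal I) (hI' : I' ≤ ω.orthogonal I')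
    (hdimI : finrank ℝ I = finrank ℝ I')
    (hdimLI : finrank ℝ ↥(L ⊓ I) = finrank ℝ ↥(L' ⊓ I')) :
    ∃ φ : V ≃ₗ[ℝ] V, (∀ x y : V, ω (φ x) (φ y) = ω x y) ∧
      Submodule.map (φ : V →ₗ[ℝ] V) L = L' ∧ Submodule.map (φ : V →ₗ[ℝ] V) I = I' := by
  obtain ⟨C, M, hsup, hLC, hCM, hM, hLM, hAD, hdim⟩ := exists_adapted_complement hnd halt hL hI
  obtain ⟨C', M', hsup', hLC', hCM', hM', hLM', hAD', hdim'⟩ :=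
    exists_adapted_complement hnd halt hL' hI'
  obtain ⟨-, hD⟩ := orthogonal_sup_eq_and_finrank hnd hL hLC
  obtain ⟨hort', hD'⟩ := orthogonal_sup_eq_and_finrank hnd hL' hLC'
  have hdimL : finrank ℝ L = finrank ℝ L' := by
    have h1 := LinearMap.BilinForm.finrank_orthogonal hnd L
    have h2 := LinearMap.BilinForm.finrank_orthogonal hnd L'
    have h3 := Submodule.finrank_le L
    have h4 := Submodule.finrank_le L'
    rw [hL] at h1
    rw [hL'] at h2
    omega
  obtain ⟨g, hgA, hgD⟩ := exists_linearEquiv_flag hAD hAD' inf_le_left inf_le_left hdimLI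
    (by omega) hdimL
  obtain ⟨φ, hφ, hφL, hφM⟩ := exists_symplectic_extension hnd halt hL hL' hM hM' hLM hLM' g
  refine ⟨φ, hφ, ?_, ?_⟩
  · refine Submodule.eq_of_le_of_finrank_eq ?_ ?_
    · rintro _ ⟨l, hl, rfl⟩
      exact (hφL ⟨l, hl⟩).symm ▸ Subtype.property _
    · rw [← hdimL]
      exact LinearEquiv.finrank_map_eq φ L
  · refine Submodule.eq_of_le_of_finrank_eq ?_ ((LinearEquiv.finrank_map_eq φ I).trans hdimI)
    rw [Submodule.map_le_iff_le_comap]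
    conv_lhs => rw [← hsup]
    refine sup_le (fun a ha => ?_) (fun c hc => ?_)
    · have := hgA ⟨a, ha.1⟩ ha
      rw [← hφL] at this
      exact this.2
    -- `φ c` is orthogonal to `D' = g D`, hence lies in `(L' ⊔ C') ⊓ M' = C'`.
    · have hmem : φ c ∈ L' ⊔ C' := by
        rw [← LinearMap.BilinForm.orthogonal_orthogonal hnd halt.isRefl (L' ⊔ C'), hort']
        intro y hy
        have h1 := hgD ⟨y, hy.1⟩ hy
        have h2 := hφL (g.symm ⟨y, hy.1⟩)
        rw [LinearEquiv.apply_symm_apply] at h2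
        change ω y (φ c) = 0
        change φ _ = y at h2
        rw [← h2, hφ]
        exact halt.isRefl _ _ (h1.2 c hc)
      obtain ⟨l, hl, c', hc', hlc⟩ := Submodule.mem_sup.1 hmem
      have hlM : l ∈ L' ⊓ M' := by
        refine ⟨hl, ?_⟩
        have := M'.sub_mem (hφM c (hCM hc)) (hCM' hc')
        rwa [← hlc, add_sub_cancel_right] at this
      rw [hLM'.inf_eq_bot, Submodule.mem_bot] at hlM
      change φ c ∈ I'
      rw [← hlc, hlM, zero_add, ← hsup']
      exact Submodule.mem_sup_right hc'
end

section
/- Let V be a symplectic vector space. The relation on pairs (L, k), where L is a Lagrangian subspace of V and k ∈ ℕ, defined by (L, k) ⪯ (L', k') if and only if d(L, L') + k ≤ k', is a partial order: it is reflexive, transitive, and antisymmetric (i.e. (L, k) ⪯ (L', k') and (L', k') ⪯ (L, k) imply L = L' and k = k'). -/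
/-!
The Chow distance `d(L, L') = dim L - dim (L ⊓ L')` is nonnegative, vanishes only if `L ≤ L'`,
and satisfies the triangle inequality; the order axioms follow by adding the indices.
For the triangle inequality, `L₁ ⊓ L₂` and `L₂ ⊓ L₃` both lie in `L₂` and their intersection lies in `L₁ ⊓ L₃`, so the dimension formula
gives `dim (L₁ ⊓ L₂) + dim (L₂ ⊓ L₃) ≤ dim L₂ + dim (L₁ ⊓ L₃)`.
-/

open Module

/-- The triangle inequality for the Chow distance, in subtraction-free form. -/
lemma finrank_inf_add_finrank_inf_le {V : Type*} [AddCommGroup V] [Module ℝ V]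
    [FiniteDimensional ℝ V] (L₁ L₂ L₃ : Submodule ℝ V) :
    finrank ℝ ↥(L₁ ⊓ L₂) + finrank ℝ ↥(L₂ ⊓ L₃) ≤ finrank ℝ L₂ + finrank ℝ ↥(L₁ ⊓ L₃) := by
  rw [← Submodule.finrank_sup_add_finrank_inf_eq]
  exact add_le_add
    (Submodule.finrank_mono (sup_le inf_le_right inf_le_left))
    (Submodule.finrank_mono (inf_le_inf inf_le_left inf_le_right))

/-- On the indexed Lagrangian Grassmannian of a symplectic vector space — pairs `(L, k)` with
`L` a Lagrangian subspace and `k ∈ ℕ` — the relation `(L, k) ⪯ (L', k')` iff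
`d(L, L') + k ≤ k'`, where `d` is the Chow distance `d(L, L') = dim L - dim (L ⊓ L')`, is a
partial order: it is reflexive, transitive, and antisymmetric. -/
theorem sublevel_partialOrder
    (V : Type*) [AddCommGroup V] [Module ℝ V] [FiniteDimensional ℝ V]
    (ω : LinearMap.BilinForm ℝ V) (hnd : ω.Nondegenerate) (halt : ω.IsAlt) :
    (∀ (L : Submodule ℝ V) (k : ℕ), ω.orthogonal L = L →
      ((finrank ℝ L : ℤ) - finrank ℝ ↥(L ⊓ L)) + k ≤ k) ∧
    (∀ (L₁ L₂ L₃ : Submodule ℝ V) (k₁ k₂ k₃ : ℕ),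
      ω.orthogonal L₁ = L₁ → ω.orthogonal L₂ = L₂ → ω.orthogonal L₃ = L₃ →
      ((finrank ℝ L₁ : ℤ) - finrank ℝ ↥(L₁ ⊓ L₂)) + k₁ ≤ k₂ →
      ((finrank ℝ L₂ : ℤ) - finrank ℝ ↥(L₂ ⊓ L₃)) + k₂ ≤ k₃ →
      ((finrank ℝ L₁ : ℤ) - finrank ℝ ↥(L₁ ⊓ L₃)) + k₁ ≤ k₃) ∧
    (∀ (L₁ L₂ : Submodule ℝ V) (k₁ k₂ : ℕ),
      ω.orthogonal L₁ = L₁ → ω.orthogonal L₂ = L₂ →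
      ((finrank ℝ L₁ : ℤ) - finrank ℝ ↥(L₁ ⊓ L₂)) + k₁ ≤ k₂ →
      ((finrank ℝ L₂ : ℤ) - finrank ℝ ↥(L₂ ⊓ L₁)) + k₂ ≤ k₁ →
      L₁ = L₂ ∧ k₁ = k₂) := by
  refine ⟨fun L k _ => by rw [inf_idem]; simp, fun L₁ L₂ L₃ k₁ k₂ k₃ _ _ _ h₁₂ h₂₃ => ?_,
    fun L₁ L₂ k₁ k₂ _ _ h₁₂ h₂₁ => ?_⟩
  · have := finrank_inf_add_finrank_inf_le L₁ L₂ L₃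
    omega
  · have hle₁ : finrank ℝ ↥(L₁ ⊓ L₂) ≤ finrank ℝ L₁ := Submodule.finrank_mono inf_le_left
    have hle₂ : finrank ℝ ↥(L₂ ⊓ L₁) ≤ finrank ℝ L₂ := Submodule.finrank_mono inf_le_left
    -- The two distances are nonnegative with sum at most `0`, so both vanish.
    have e₁ : L₁ ⊓ L₂ = L₁ := Submodule.eq_of_le_of_finrank_eq inf_le_left (by omega)
    have e₂ : L₂ ⊓ L₁ = L₂ := Submodule.eq_of_le_of_finrank_eq inf_le_left (by omega)
    exact ⟨le_antisymm (inf_eq_left.mp e₁) (inf_eq_left.mp e₂), by omega⟩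
end

section
/- Let V be a symplectic vector space, C a coisotropic subspace of V, and L₁, L₂ Lagrangian subspaces of V. Then the Chow distance between the reductions satisfies d(L₁^C, L₂^C) ≤ d(L₁, L₂); concretely, with Λᵢ := (Lᵢ ∩ C) + Cᗮ, one has (dim Λ₁ − dim(Λ₁ ∩ Λ₂)) ≤ (dim L₁ − dim(L₁ ∩ L₂)). -/
/-!
Write `D = Cᗮ ≤ C` and `M = L₁ ⊓ L₂`. Since `(M ⊓ C) ⊔ D ≤ Λ₁ ⊓ Λ₂`, the reduced distance is at most
`dim ((L₁ ⊓ C) ⊔ D) - dim ((M ⊓ C) ⊔ D)`, and because `D ≤ C` this equals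
`(dim (L₁ ⊓ C) - dim (M ⊓ C)) - (dim (L₁ ⊓ D) - dim (M ⊓ D))`.
The second bracket is nonnegative as `M ≤ L₁`, and the first is at most `dim L₁ - dim M`, because
`(L₁ ⊓ C) ⊔ M ≤ L₁` while `(L₁ ⊓ C) ⊓ M = M ⊓ C`.
-/

open Module

/-- Symplectic reduction does not increase the Chow distance: for a coisotropic subspace `C`
of a symplectic vector space `V` and Lagrangian subspaces `L₁, L₂`, with the reductions
represented by `Λᵢ = (Lᵢ ⊓ C) ⊔ Cᗮ`, one has
`dim Λ₁ - dim (Λ₁ ⊓ Λ₂) ≤ dim L₁ - dim (L₁ ⊓ L₂)`. -/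
theorem chow_distance_reduction_le
    (V : Type*) [AddCommGroup V] [Module ℝ V] [FiniteDimensional ℝ V]
    (ω : LinearMap.BilinForm ℝ V) (hnd : ω.Nondegenerate) (halt : ω.IsAlt)
    (C : Submodule ℝ V) (hC : ω.orthogonal C ≤ C)
    (L₁ L₂ : Submodule ℝ V) (h₁ : ω.orthogonal L₁ = L₁) (h₂ : ω.orthogonal L₂ = L₂) :
    (finrank ℝ ↥((L₁ ⊓ C) ⊔ ω.orthogonal C) : ℤ) -
        finrank ℝ ↥(((L₁ ⊓ C) ⊔ ω.orthogonal C) ⊓ ((L₂ ⊓ C) ⊔ ω.orthogonal C)) ≤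
      (finrank ℝ L₁ : ℤ) - finrank ℝ ↥(L₁ ⊓ L₂) := by
  generalize ω.orthogonal C = D at hC ⊢
  have e₁ := Submodule.finrank_sup_add_finrank_inf_eq (L₁ ⊓ C) D
  have e₂ := Submodule.finrank_sup_add_finrank_inf_eq (L₁ ⊓ L₂ ⊓ C) D
  have e₃ := Submodule.finrank_sup_add_finrank_inf_eq (L₁ ⊓ C) (L₁ ⊓ L₂)
  rw [inf_assoc _ C D, inf_eq_right.mpr hC] at e₁ e₂
  have hinf : L₁ ⊓ C ⊓ (L₁ ⊓ L₂) = L₁ ⊓ L₂ ⊓ C := by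
    rw [inf_inf_inf_comm, inf_idem, inf_comm C, inf_assoc]
  rw [hinf] at e₃
  have i₁ : finrank ℝ ↥(L₁ ⊓ L₂ ⊓ C ⊔ D) ≤
      finrank ℝ ↥((L₁ ⊓ C ⊔ D) ⊓ (L₂ ⊓ C ⊔ D)) :=
    Submodule.finrank_mono (le_inf
      (sup_le_sup_right (inf_le_inf_right C inf_le_left) D)
      (sup_le_sup_right (inf_le_inf_right C inf_le_right) D))
  have i₂ : finrank ℝ ↥(L₁ ⊓ C ⊔ L₁ ⊓ L₂) ≤ finrank ℝ L₁ :=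
    Submodule.finrank_mono (sup_le inf_le_left inf_le_left)
  have i₃ : finrank ℝ ↥(L₁ ⊓ L₂ ⊓ D) ≤ finrank ℝ ↥(L₁ ⊓ D) :=
    Submodule.finrank_mono (inf_le_inf_right D inf_le_left)
  omega
end

section
/- Let V be a symplectic vector space, C a coisotropic subspace of V, and L₁, L₂ Lagrangian subspaces of V. Then, as integers, d(L₁^C, L₂^C) ≤ d(L₁, L₂) − |E^C(L₁) − E^C(L₂)|, where E^C(L) := dim(L ∩ Cᗮ) is the excess of L relative to C. -/
/-!
Write `K = Cᗮ`, `k = dim K`. For every subspace `A`, the subspaces `A ⊓ C` and `Aᗮ ⊔ K` are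
`ω`-orthogonal complements of each other, so counting dimensions gives
`dim (A ⊓ C) + k = dim A + dim (Aᗮ ⊓ K)` (`finrank_inf_add_finrank_orthogonal`), and hence, as
`K ≤ C`, `dim ((A ⊓ C) ⊔ K) = dim A + dim (Aᗮ ⊓ K) - dim (A ⊓ K)` (`finrank_reduction`).

For `A = L₁` Lagrangian this says that reduction preserves the dimension. For `A = L₁ ⊓ L₂`, the
space `(A ⊓ C) ⊔ K` lies in both representatives of the reductions, while `Aᗮ` contains both
`L₁` and `L₂` and `A` lies in both; so the intersection of the representatives has dimension at
least `dim (L₁ ⊓ L₂) + |E^C(L₁) - E^C(L₂)|`.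
-/

open Module

section ChowReduction

variable {V : Type*} [AddCommGroup V] [Module ℝ V] [FiniteDimensional ℝ V]
  {ω : LinearMap.BilinForm ℝ V}

lemma finrank_inf_add_finrank_orthogonal (hnd : ω.Nondegenerate) (halt : ω.IsAlt)
    (A C : Submodule ℝ V) :
    finrank ℝ ↥(A ⊓ C) + finrank ℝ ↥(ω.orthogonal C) =
      finrank ℝ A + finrank ℝ ↥(ω.orthogonal A ⊓ ω.orthogonal C) := by
  have hrefl : ω.IsRefl := halt.isRefl
  have key : ω.orthogonal (ω.orthogonal A ⊔ ω.orthogonal C) = A ⊓ C := by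
    apply le_antisymm
    · apply le_inf
      · exact (LinearMap.BilinForm.orthogonal_le le_sup_left).trans
          (LinearMap.BilinForm.orthogonal_orthogonal hnd hrefl A).le
      · exact (LinearMap.BilinForm.orthogonal_le le_sup_right).trans
          (LinearMap.BilinForm.orthogonal_orthogonal hnd hrefl C).le
    · exact (LinearMap.BilinForm.le_orthogonal_orthogonal hrefl).trans
        (LinearMap.BilinForm.orthogonal_le (sup_le (LinearMap.BilinForm.orthogonal_le inf_le_left)
          (LinearMap.BilinForm.orthogonal_le inf_le_right)))
  have e₁ := LinearMap.BilinForm.finrank_orthogonal hnd (ω.orthogonal A ⊔ ω.orthogonal C)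
  rw [key] at e₁
  have e₂ := LinearMap.BilinForm.finrank_orthogonal hnd A
  have e₃ := Submodule.finrank_sup_add_finrank_inf_eq (ω.orthogonal A) (ω.orthogonal C)
  have b₁ := Submodule.finrank_le (ω.orthogonal A ⊔ ω.orthogonal C)
  have b₂ := Submodule.finrank_le A
  omega

lemma finrank_reduction (hnd : ω.Nondegenerate) (halt : ω.IsAlt)
    (A C : Submodule ℝ V) (hC : ω.orthogonal C ≤ C) :
    finrank ℝ ↥((A ⊓ C) ⊔ ω.orthogonal C) + finrank ℝ ↥(A ⊓ ω.orthogonal C) =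
      finrank ℝ A + finrank ℝ ↥(ω.orthogonal A ⊓ ω.orthogonal C) := by
  rw [← finrank_inf_add_finrank_orthogonal hnd halt A C,
    ← Submodule.finrank_sup_add_finrank_inf_eq (A ⊓ C) (ω.orthogonal C), inf_assoc,
    inf_eq_right.mpr hC]

end ChowReduction

/-- The strengthened distance inequality for symplectic reduction: for a coisotropic `C` and
Lagrangians `L₁, L₂` in a symplectic vector space `V`, with reductions represented by
`Λᵢ = (Lᵢ ⊓ C) ⊔ Cᗮ` and excesses `E^C(Lᵢ) = dim (Lᵢ ⊓ Cᗮ)`, one has (as integers)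
`d(L₁^C, L₂^C) ≤ d(L₁, L₂) - |E^C(L₁) - E^C(L₂)|`. -/
theorem chow_distance_reduction_le_sub_excess
    (V : Type*) [AddCommGroup V] [Module ℝ V] [FiniteDimensional ℝ V]
    (ω : LinearMap.BilinForm ℝ V) (hnd : ω.Nondegenerate) (halt : ω.IsAlt)
    (C : Submodule ℝ V) (hC : ω.orthogonal C ≤ C)
    (L₁ L₂ : Submodule ℝ V) (h₁ : ω.orthogonal L₁ = L₁) (h₂ : ω.orthogonal L₂ = L₂) :
    (finrank ℝ ↥((L₁ ⊓ C) ⊔ ω.orthogonal C) : ℤ) -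
        finrank ℝ ↥(((L₁ ⊓ C) ⊔ ω.orthogonal C) ⊓ ((L₂ ⊓ C) ⊔ ω.orthogonal C)) ≤
      ((finrank ℝ L₁ : ℤ) - finrank ℝ ↥(L₁ ⊓ L₂)) -
        |(finrank ℝ ↥(L₁ ⊓ ω.orthogonal C) : ℤ) - finrank ℝ ↥(L₂ ⊓ ω.orthogonal C)| := by
  have r₁ := finrank_reduction hnd halt L₁ C hC
  rw [h₁] at r₁
  have r := finrank_reduction hnd halt (L₁ ⊓ L₂) C hC
  have le₁ : L₁ ≤ ω.orthogonal (L₁ ⊓ L₂) :=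
    h₁.ge.trans (LinearMap.BilinForm.orthogonal_le inf_le_left)
  have le₂ : L₂ ≤ ω.orthogonal (L₁ ⊓ L₂) :=
    h₂.ge.trans (LinearMap.BilinForm.orthogonal_le inf_le_right)
  have m₁ := Submodule.finrank_mono (inf_le_inf_right (ω.orthogonal C) le₁)
  have m₂ := Submodule.finrank_mono (inf_le_inf_right (ω.orthogonal C) le₂)
  have n₁ := Submodule.finrank_mono
    (inf_le_inf_right (ω.orthogonal C) (inf_le_left : L₁ ⊓ L₂ ≤ L₁))
  have n₂ := Submodule.finrank_mono
    (inf_le_inf_right (ω.orthogonal C) (inf_le_right : L₁ ⊓ L₂ ≤ L₂))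
  have s : ((L₁ ⊓ L₂) ⊓ C) ⊔ ω.orthogonal C ≤
      ((L₁ ⊓ C) ⊔ ω.orthogonal C) ⊓ ((L₂ ⊓ C) ⊔ ω.orthogonal C) :=
    le_inf (sup_le_sup_right (inf_le_inf_right C inf_le_left) _)
      (sup_le_sup_right (inf_le_inf_right C inf_le_right) _)
  have m := Submodule.finrank_mono s
  rcases abs_cases ((finrank ℝ ↥(L₁ ⊓ ω.orthogonal C) : ℤ) - finrank ℝ ↥(L₂ ⊓ ω.orthogonal C))
    with ⟨h, -⟩ | ⟨h, -⟩ <;> rw [h] <;> omega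
end

section
/- Let V be a symplectic vector space and C a coisotropic subspace of V. The indexed reduction ρ^C_•, sending (L, k) to (L^C, k + E^C(L)), is order-preserving for the sublevel partial order: for Lagrangians L₁, L₂ and k₁, k₂ ∈ ℕ, if d(L₁, L₂) + k₁ ≤ k₂ then d(L₁^C, L₂^C) + k₁ + E^C(L₁) ≤ k₂ + E^C(L₂). -/
/-!
Write `n = dim L₁ = dim L₂`, so that `dim V = 2n`, and `I = Cᗮ`. Taking ω-orthogonals turns
`L ⊓ C` into `L ⊔ I`, which gives `dim ((L₁ ⊓ C) ⊔ I) = n`. The claim therefore becomes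
`dim (L₁ ⊓ L₂) + dim (L₁ ⊓ I) ≤ dim (R₁ ⊓ R₂) + dim (L₂ ⊓ I)`, where `Rᵢ = (Lᵢ ⊓ C) ⊔ I`.

Bound `R₁ ⊓ R₂` from below by `(L₁ ⊓ L₂ ⊓ C) ⊔ I`. Its dimension is again computed by duality,
since `L₁ ⊓ L₂ ⊓ C = ((L₁ ⊔ L₂) ⊔ I)ᗮ` and `L₁ ⊓ L₂ = (L₁ ⊔ L₂)ᗮ`, and the claim reduces to
`dim (L₁ ⊓ I) + dim (L₁ ⊓ L₂ ⊓ I) ≤ dim ((L₁ ⊔ L₂) ⊓ I) + dim (L₂ ⊓ I)`,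
which holds term by term.
-/

open Module

lemma orthogonal_sup_eq_inf {V : Type*} [AddCommGroup V] [Module ℝ V]
    (ω : LinearMap.BilinForm ℝ V) (A B : Submodule ℝ V) :
    ω.orthogonal (A ⊔ B) = ω.orthogonal A ⊓ ω.orthogonal B := by
  refine le_antisymm (le_inf (ω.orthogonal_le le_sup_left) (ω.orthogonal_le le_sup_right)) ?_
  rintro x ⟨hA, hB⟩ y hy
  obtain ⟨a, ha, b, hb, rfl⟩ := Submodule.mem_sup.1 hy
  have h1 : ω a x = 0 := hA a ha
  have h2 : ω b x = 0 := hB b hb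
  simp [h1, h2]

/-- The dimension of `(Wᗮ ⊓ C) ⊔ Cᗮ` for `C` coisotropic and `W` arbitrary, obtained from
`Wᗮ ⊓ C = (W ⊔ Cᗮ)ᗮ`. Used for `W = L₁` and for `W = L₁ ⊔ L₂`, whose orthogonal is `L₁ ⊓ L₂`. -/
lemma finrank_orthogonal_inf_sup {V : Type*} [AddCommGroup V] [Module ℝ V]
    [FiniteDimensional ℝ V] (ω : LinearMap.BilinForm ℝ V) (hnd : ω.Nondegenerate)
    (halt : ω.IsAlt) (C : Submodule ℝ V) (hC : ω.orthogonal C ≤ C) (W : Submodule ℝ V) :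
    finrank ℝ ↥((ω.orthogonal W ⊓ C) ⊔ ω.orthogonal C)
        + finrank ℝ ↥(ω.orthogonal W ⊓ ω.orthogonal C) + finrank ℝ W =
      finrank ℝ V + finrank ℝ ↥(W ⊓ ω.orthogonal C) := by
  have hsup := orthogonal_sup_eq_inf ω W (ω.orthogonal C)
  rw [ω.orthogonal_orthogonal hnd halt.isRefl C] at hsup
  have hdual := ω.finrank_orthogonal hnd (W ⊔ ω.orthogonal C)
  rw [hsup] at hdual
  have hle := (W ⊔ ω.orthogonal C).finrank_le
  have e1 := Submodule.finrank_sup_add_finrank_inf_eq W (ω.orthogonal C)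
  have e2 := Submodule.finrank_sup_add_finrank_inf_eq (ω.orthogonal W ⊓ C) (ω.orthogonal C)
  rw [inf_assoc, inf_eq_right.2 hC] at e2
  omega

/-- Indexed symplectic reduction `(L, k) ↦ (L^C, k + E^C(L))` is order-preserving for the
sublevel partial order `(L, k) ⪯ (L', k') ↔ d(L, L') + k ≤ k'` on the indexed Lagrangian
Grassmannian: if `d(L₁, L₂) + k₁ ≤ k₂` then
`d(L₁^C, L₂^C) + (k₁ + E^C(L₁)) ≤ k₂ + E^C(L₂)`.  Here `C` is coisotropic, the reduction
`L^C` is represented by `(L ⊓ C) ⊔ Cᗮ`, the excess is `E^C(L) = dim (L ⊓ Cᗮ)`, and the Chow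
distance is `d(L, L') = dim L - dim (L ⊓ L')`. -/
theorem indexed_reduction_monotone
    (V : Type*) [AddCommGroup V] [Module ℝ V] [FiniteDimensional ℝ V]
    (ω : LinearMap.BilinForm ℝ V) (hnd : ω.Nondegenerate) (halt : ω.IsAlt)
    (C : Submodule ℝ V) (hC : ω.orthogonal C ≤ C)
    (L₁ L₂ : Submodule ℝ V) (h₁ : ω.orthogonal L₁ = L₁) (h₂ : ω.orthogonal L₂ = L₂)
    (k₁ k₂ : ℕ)
    (h : ((finrank ℝ L₁ : ℤ) - finrank ℝ ↥(L₁ ⊓ L₂)) + k₁ ≤ k₂) :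
    ((finrank ℝ ↥((L₁ ⊓ C) ⊔ ω.orthogonal C) : ℤ) -
        finrank ℝ ↥(((L₁ ⊓ C) ⊔ ω.orthogonal C) ⊓ ((L₂ ⊓ C) ⊔ ω.orthogonal C))) +
      (k₁ + finrank ℝ ↥(L₁ ⊓ ω.orthogonal C)) ≤
        k₂ + finrank ℝ ↥(L₂ ⊓ ω.orthogonal C) := by
  have hR := finrank_orthogonal_inf_sup ω hnd halt C hC L₁
  have hS := finrank_orthogonal_inf_sup ω hnd halt C hC (L₁ ⊔ L₂)
  have hd₁ := ω.finrank_orthogonal hnd L₁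
  have hd := ω.finrank_orthogonal hnd (L₁ ⊔ L₂)
  have hle₁ := L₁.finrank_le
  have hle := (L₁ ⊔ L₂).finrank_le
  rw [orthogonal_sup_eq_inf, h₁, h₂] at hS hd
  rw [h₁] at hR hd₁
  have hmono : finrank ℝ ↥((L₁ ⊓ L₂ ⊓ C) ⊔ ω.orthogonal C) ≤
      finrank ℝ ↥(((L₁ ⊓ C) ⊔ ω.orthogonal C) ⊓ ((L₂ ⊓ C) ⊔ ω.orthogonal C)) :=
    Submodule.finrank_mono <| le_inf
      (sup_le_sup_right (inf_le_inf_right C inf_le_left) _)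
      (sup_le_sup_right (inf_le_inf_right C inf_le_right) _)
  have ha : finrank ℝ ↥(L₁ ⊓ L₂ ⊓ ω.orthogonal C) ≤ finrank ℝ ↥(L₂ ⊓ ω.orthogonal C) :=
    Submodule.finrank_mono (inf_le_inf_right _ inf_le_right)
  have hb : finrank ℝ ↥(L₁ ⊓ ω.orthogonal C) ≤ finrank ℝ ↥((L₁ ⊔ L₂) ⊓ ω.orthogonal C) :=
    Submodule.finrank_mono (inf_le_inf_right _ le_sup_left)
  omega
end

section
/- Let V be a symplectic vector space and C a coisotropic subspace of V. For every subspace Λ with Cᗮ ⊆ Λ ⊆ C whose image in the reduction C/Cᗮ is Lagrangian (equivalently, Λᗮ ∩ C = Λ), and for every nonnegative integer k with k ≤ dim Cᗮ, there exists a Lagrangian subspace L of V such that (L ∩ C) + Cᗮ = Λ and dim(L ∩ Cᗮ) = k. In other words, the indexed reduction ρ^C_• is surjective onto the set of pairs (Λ, k) with Λ Lagrangian in C/Cᗮ and k ≤ dim Cᗮ. -/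
open Module

/-!
Since `Cᗮ ≤ Λ`, the subspace `Λᗮ` lies in `C`, so the hypothesis on `Λ` makes `Λ` itself Lagrangian
in `V`; it reduces to `Λ` with the maximal excess `dim Cᗮ`. The excess is then lowered one unit at
a time (`exists_lagrangian_excess_pred`): given a nonzero `e ∈ L ⊓ Cᗮ`, pick `f` with `ω f e ≠ 0`
and replace `L` by `(L ⊓ fᗮ) ⊔ span f`. As `e` is orthogonal to `C` and to `L`, but not to `f`,
the new Lagrangian meets `C` inside `L ⊓ fᗮ`; hence only the direction `e ∈ Cᗮ` is lost, so the
reduction is unchanged while the intersection with `Cᗮ` drops by exactly one dimension.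
-/

/-- If `L` is Lagrangian, `e ∈ L` and `ω f e ≠ 0`, then `(L ⊓ fᗮ) ⊔ span f` is Lagrangian. -/
lemma orthogonal_exchange {V : Type*} [AddCommGroup V] [Module ℝ V]
    (ω : LinearMap.BilinForm ℝ V) (halt : ω.IsAlt) (L : Submodule ℝ V)
    (hL : ω.orthogonal L = L) (e f : V) (he : e ∈ L) (hfe : ω f e ≠ 0) :
    ω.orthogonal ((L ⊓ LinearMap.ker (ω f)) ⊔ Submodule.span ℝ {f}) =
      (L ⊓ LinearMap.ker (ω f)) ⊔ Submodule.span ℝ {f} := by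
  have hLL : ∀ x ∈ L, ∀ y ∈ L, ω x y = 0 := fun x hx y hy => by
    rw [← hL] at hy
    exact hy x hx
  apply le_antisymm
  · intro x hx
    have hxf : ω f x = 0 :=
      hx f (Submodule.mem_sup_right (Submodule.mem_span_singleton_self f))
    have hxH : ∀ h ∈ L, ω f h = 0 → ω h x = 0 := fun h h1 h2 =>
      hx h (Submodule.mem_sup_left ⟨h1, h2⟩)
    -- The coefficient `c` makes `x - c • f` orthogonal to `e`, hence to all of `L`.
    set c := ω e x / ω e f with hc
    have hef : ω e f ≠ 0 := fun h => hfe (halt.eq_iff.1 h)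
    have hxc : x - c • f ∈ L := by
      rw [← hL]
      intro l hl
      have h1 : ω f (l - (ω f l / ω f e) • e) = 0 := by
        simp [div_mul_cancel₀ _ hfe]
      have hm : l - (ω f l / ω f e) • e ∈ L := L.sub_mem hl (L.smul_mem _ he)
      have h2 := hxH _ hm h1
      have h3 : ω (l - (ω f l / ω f e) • e) f = 0 := halt.eq_iff.1 h1
      have h4 : ω e (x - c • f) = 0 := by
        simp [hc, div_mul_cancel₀ _ hef]
      have h5 : ω (l - (ω f l / ω f e) • e) (x - c • f) = 0 := by
        rw [map_sub, map_smul, h2, h3]; simp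
      change ω l (x - c • f) = 0
      rw [map_sub ω, LinearMap.sub_apply, map_smul ω, LinearMap.smul_apply, h4] at h5
      simpa using h5
    have hsum : x = (x - c • f) + c • f := by abel
    rw [hsum]
    refine Submodule.add_mem_sup ⟨hxc, ?_⟩ (Submodule.smul_mem _ _
      (Submodule.mem_span_singleton_self f))
    simp [hxf, halt.self_eq_zero f]
  · intro x hx y hy
    obtain ⟨a, ha, b, hb, rfl⟩ := Submodule.mem_sup.1 hx
    obtain ⟨a', ha', b', hb', rfl⟩ := Submodule.mem_sup.1 hy
    obtain ⟨s, rfl⟩ := Submodule.mem_span_singleton.1 hb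
    obtain ⟨t, rfl⟩ := Submodule.mem_span_singleton.1 hb'
    have h1 : ω f a = 0 := ha.2
    have h2 : ω a' f = 0 := halt.eq_iff.1 ha'.2
    change ω (a' + t • f) (a + s • f) = 0
    simp [hLL a' ha'.1 a ha.1, h1, h2, halt.self_eq_zero f]

/-- The excess can be lowered by one without changing the reduction. -/
lemma exists_lagrangian_excess_pred {V : Type*} [AddCommGroup V] [Module ℝ V]
    [FiniteDimensional ℝ V] (ω : LinearMap.BilinForm ℝ V) (hnd : ω.Nondegenerate)
    (halt : ω.IsAlt) (C : Submodule ℝ V) (hC : ω.orthogonal C ≤ C) (L : Submodule ℝ V)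
    (hL : ω.orthogonal L = L) (k : ℕ) (hk : finrank ℝ ↥(L ⊓ ω.orthogonal C) = k + 1) :
    ∃ L' : Submodule ℝ V, ω.orthogonal L' = L' ∧
      (L' ⊓ C) ⊔ ω.orthogonal C = (L ⊓ C) ⊔ ω.orthogonal C ∧
      finrank ℝ ↥(L' ⊓ ω.orthogonal C) = k := by
  have hne : L ⊓ ω.orthogonal C ≠ ⊥ := by
    intro h
    rw [h, finrank_bot] at hk
    omega
  obtain ⟨e, ⟨heL, heC⟩, he0⟩ := Submodule.exists_mem_ne_zero_of_ne_bot hne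
  obtain ⟨f, hfe⟩ : ∃ f, ω f e ≠ 0 := by
    by_contra! h
    exact he0 (hnd.2 e h)
  have hef : ω e f ≠ 0 := fun h => hfe (halt.eq_iff.1 h)
  have hLL : ∀ y ∈ L, ω e y = 0 := fun y hy => by
    rw [← hL] at hy
    exact hy e heL
  set L' := (L ⊓ LinearMap.ker (ω f)) ⊔ Submodule.span ℝ {f}
  -- Pairing with `e` kills `C` and `L` but not `f`, so elements of `L' ⊓ C` have no `f`-part.
  have key : ∀ x ∈ L', x ∈ C → x ∈ L ∧ ω f x = 0 := by
    intro x hx hxC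
    obtain ⟨a, ha, b, hb, rfl⟩ := Submodule.mem_sup.1 hx
    obtain ⟨s, rfl⟩ := Submodule.mem_span_singleton.1 hb
    have h1 : ω e (a + s • f) = 0 := halt.eq_iff.1 (heC _ hxC)
    have h2 : s = 0 := by simpa [hLL a ha.1, hef] using h1
    subst h2
    simpa using ha
  have hdecomp : ∀ x, ω f (x - (ω f x / ω f e) • e) = 0 := fun x => by
    simp [div_mul_cancel₀ _ hfe]
  refine ⟨L', orthogonal_exchange ω halt L hL e f heL hfe, ?_, ?_⟩
  · apply le_antisymm
    · exact sup_le_sup_right (fun x hx => ⟨(key x hx.1 hx.2).1, hx.2⟩) _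
    · refine sup_le (fun x hx => ?_) le_sup_right
      have hsum : x = (x - (ω f x / ω f e) • e) + (ω f x / ω f e) • e := by abel
      rw [hsum]
      refine Submodule.add_mem_sup ⟨Submodule.mem_sup_left ⟨?_, hdecomp x⟩, ?_⟩
        (Submodule.smul_mem _ _ heC)
      · exact L.sub_mem hx.1 (L.smul_mem _ heL)
      · exact C.sub_mem hx.2 (C.smul_mem _ (hC heC))
  · have hsup : (L' ⊓ ω.orthogonal C) ⊔ Submodule.span ℝ {e} = L ⊓ ω.orthogonal C := by
      apply le_antisymm
      · refine sup_le (fun x hx => ⟨(key x hx.1 (hC hx.2)).1, hx.2⟩) ?_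
        rw [Submodule.span_singleton_le_iff_mem]
        exact ⟨heL, heC⟩
      · intro x hx
        have hsum : x = (x - (ω f x / ω f e) • e) + (ω f x / ω f e) • e := by abel
        rw [hsum]
        refine Submodule.add_mem_sup ⟨Submodule.mem_sup_left ⟨?_, hdecomp x⟩, ?_⟩
          (Submodule.smul_mem _ _ (Submodule.mem_span_singleton_self e))
        · exact L.sub_mem hx.1 (L.smul_mem _ heL)
        · exact Submodule.sub_mem _ hx.2 (Submodule.smul_mem _ _ heC)
    have hinf : (L' ⊓ ω.orthogonal C) ⊓ Submodule.span ℝ {e} = ⊥ := by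
      rw [eq_bot_iff]
      rintro x ⟨hx, hxe⟩
      obtain ⟨s, rfl⟩ := Submodule.mem_span_singleton.1 hxe
      have h1 := (key _ hx.1 (hC hx.2)).2
      have h2 : s = 0 := by simpa [hfe] using h1
      simp [h2]
    have hdim := Submodule.finrank_sup_add_finrank_inf_eq
      (L' ⊓ ω.orthogonal C) (Submodule.span ℝ {e})
    rw [hsup, hinf, finrank_bot, finrank_span_singleton he0, hk] at hdim
    omega

/-- Surjectivity of indexed symplectic reduction: let `C` be a coisotropic subspace of a
symplectic vector space `V`.  For every subspace `Λ` with `Cᗮ ⊆ Λ ⊆ C` whose image in the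
reduction `C/Cᗮ` is Lagrangian (equivalently `Λᗮ ⊓ C = Λ`), and every `k ≤ dim Cᗮ`, there is
a Lagrangian subspace `L` of `V` with `(L ⊓ C) ⊔ Cᗮ = Λ` and excess `dim (L ⊓ Cᗮ) = k`. -/
theorem indexed_reduction_surjective
    (V : Type*) [AddCommGroup V] [Module ℝ V] [FiniteDimensional ℝ V]
    (ω : LinearMap.BilinForm ℝ V) (hnd : ω.Nondegenerate) (halt : ω.IsAlt)
    (C : Submodule ℝ V) (hC : ω.orthogonal C ≤ C)
    (Λ : Submodule ℝ V) (hΛ₁ : ω.orthogonal C ≤ Λ) (hΛ₂ : Λ ≤ C)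
    (hΛ : ω.orthogonal Λ ⊓ C = Λ)
    (k : ℕ) (hk : k ≤ finrank ℝ ↥(ω.orthogonal C)) :
    ∃ L : Submodule ℝ V, ω.orthogonal L = L ∧
      (L ⊓ C) ⊔ ω.orthogonal C = Λ ∧ finrank ℝ ↥(L ⊓ ω.orthogonal C) = k := by
  have hrefl : ω.IsRefl := halt.isRefl
  have hΛC : ω.orthogonal Λ ≤ C := by
    have h := LinearMap.BilinForm.orthogonal_le (B := ω) hΛ₁
    rwa [LinearMap.BilinForm.orthogonal_orthogonal hnd hrefl] at h
  have hΛL : ω.orthogonal Λ = Λ := by rwa [inf_eq_left.2 hΛC] at hΛ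
  induction hk using Nat.decreasingInduction with
  | self =>
    exact ⟨Λ, hΛL, by rw [inf_eq_left.2 hΛ₂, sup_eq_left.2 hΛ₁], by rw [inf_eq_right.2 hΛ₁]⟩
  | of_succ k _ ih =>
    obtain ⟨L, hL, hred, hdim⟩ := ih
    obtain ⟨L', hL', hred', hdim'⟩ :=
      exists_lagrangian_excess_pred ω hnd halt C hC L hL k hdim
    exact ⟨L', hL', hred'.trans hred, hdim'⟩
end

section
/- Let X, Y, Z be symplectic vector spaces with forms ω_X, ω_Y, ω_Z. Let f ⊆ X × Y be a Lagrangian subspace for the form ω_X ⊖ ω_Y, and let g ⊆ Y × Z be a Lagrangian subspace for ω_Y ⊖ ω_Z. Then the set-theoretic composition f ∘ g := {(x, z) ∈ X × Z : ∃ y ∈ Y, (x, y) ∈ f and (y, z) ∈ g} is a Lagrangian subspace of X × Z for the form ω_X ⊖ ω_Z. (In particular, symplectic vector spaces and linear canonical relations form a category.) -/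
/-!
The composite `W` is isotropic by chaining `ωX a x = ωY b y = ωZ d z`. For the converse, let
`(x, z)` be orthogonal to `W`. A point `y` with `(x, y) ∈ f` and `(y, z) ∈ g` is the same as a
solution of `ωX a x - ωZ d z = ωY (b - c) y` for all `(a, b) ∈ f`, `(c, d) ∈ g`. The left side is
a functional on `f × g`; it vanishes on the kernel `b = c` of `T : ((a, b), (c, d)) ↦ b - c`, as
there `(a, d) ∈ W`. Hence it factors through `T` as a functional on `Y`, which nondegeneracy of
`ωY` represents by some `y`.
-/

open Module

/-- The difference form `ω_X ⊖ ω_Y` on `X × Y`: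
`(ω_X ⊖ ω_Y)((x, y), (x', y')) = ω_X x x' - ω_Y y y'`. -/
noncomputable def diffForm {X Y : Type*} [AddCommGroup X] [Module ℝ X]
    [AddCommGroup Y] [Module ℝ Y]
    (ωX : LinearMap.BilinForm ℝ X) (ωY : LinearMap.BilinForm ℝ Y) :
    LinearMap.BilinForm ℝ (X × Y) :=
  ωX.comp (LinearMap.fst ℝ X Y) (LinearMap.fst ℝ X Y) -
    ωY.comp (LinearMap.snd ℝ X Y) (LinearMap.snd ℝ X Y)

theorem mem_iff_of_orthogonal_eq {X Y : Type*} [AddCommGroup X] [Module ℝ X]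
    [AddCommGroup Y] [Module ℝ Y]
    {ωX : LinearMap.BilinForm ℝ X} {ωY : LinearMap.BilinForm ℝ Y}
    {f : Submodule ℝ (X × Y)} (hf : (diffForm ωX ωY).orthogonal f = f) (x : X) (y : Y) :
    (x, y) ∈ f ↔ ∀ a b, (a, b) ∈ f → ωX a x = ωY b y := by
  conv_lhs => rw [← hf]
  simp [LinearMap.BilinForm.mem_orthogonal_iff, diffForm,
    sub_eq_zero]

/-- The set-theoretic composition of linear canonical relations is again a linear canonical
relation: if `f ⊆ X × Y` is Lagrangian for `ω_X ⊖ ω_Y` and `g ⊆ Y × Z` is Lagrangian for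
`ω_Y ⊖ ω_Z`, then `{(x, z) : ∃ y, (x, y) ∈ f ∧ (y, z) ∈ g}` is a Lagrangian subspace of
`X × Z` for `ω_X ⊖ ω_Z`. -/
theorem comp_canonical_relation_lagrangian
    (X Y Z : Type*) [AddCommGroup X] [Module ℝ X] [FiniteDimensional ℝ X]
    [AddCommGroup Y] [Module ℝ Y] [FiniteDimensional ℝ Y]
    [AddCommGroup Z] [Module ℝ Z] [FiniteDimensional ℝ Z]
    (ωX : LinearMap.BilinForm ℝ X) (hXnd : ωX.Nondegenerate) (hXalt : ωX.IsAlt)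
    (ωY : LinearMap.BilinForm ℝ Y) (hYnd : ωY.Nondegenerate) (hYalt : ωY.IsAlt)
    (ωZ : LinearMap.BilinForm ℝ Z) (hZnd : ωZ.Nondegenerate) (hZalt : ωZ.IsAlt)
    (f : Submodule ℝ (X × Y)) (hf : (diffForm ωX ωY).orthogonal f = f)
    (g : Submodule ℝ (Y × Z)) (hg : (diffForm ωY ωZ).orthogonal g = g) :
    ∃ W : Submodule ℝ (X × Z),
      (W : Set (X × Z)) = {p | ∃ y : Y, (p.1, y) ∈ f ∧ (y, p.2) ∈ g} ∧
      (diffForm ωX ωZ).orthogonal W = W := by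
  let W : Submodule ℝ (X × Z) :=
    { carrier := {p | ∃ y : Y, (p.1, y) ∈ f ∧ (y, p.2) ∈ g}
      zero_mem' := ⟨0, f.zero_mem, g.zero_mem⟩
      add_mem' := by
        rintro p q ⟨y, h₁, h₂⟩ ⟨y', h₁', h₂'⟩
        exact ⟨y + y', f.add_mem h₁ h₁', g.add_mem h₂ h₂'⟩
      smul_mem' := by
        rintro r p ⟨y, h₁, h₂⟩
        exact ⟨r • y, f.smul_mem r h₁, g.smul_mem r h₂⟩ }
  refine ⟨W, rfl, le_antisymm ?_ ?_⟩
  · rintro ⟨x, z⟩ hxz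
    have hW : ∀ a b d, (a, b) ∈ f → (b, d) ∈ g → ωX a x = ωZ d z := by
      intro a b d hab hbd
      have h := hxz (a, d) ⟨b, hab, hbd⟩
      simpa [diffForm, sub_eq_zero] using h
    let T : (f × g) →ₗ[ℝ] Y :=
      (LinearMap.snd ℝ X Y ∘ₗ f.subtype).coprod (-(LinearMap.fst ℝ Y Z ∘ₗ g.subtype))
    let L : Dual ℝ (f × g) :=
      (ωX.flip x ∘ₗ LinearMap.fst ℝ X Y ∘ₗ f.subtype).coprod
        (-(ωZ.flip z ∘ₗ LinearMap.snd ℝ Y Z ∘ₗ g.subtype))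
    have hL : L ∈ LinearMap.range T.dualMap := by
      rw [LinearMap.range_dualMap_eq_dualAnnihilator_ker, Submodule.mem_dualAnnihilator]
      rintro ⟨⟨⟨a, b⟩, hab⟩, ⟨⟨c, d⟩, hcd⟩⟩ h
      have hbc : b = c := by simpa [T, ← sub_eq_add_neg, sub_eq_zero] using h
      subst hbc
      simp [L, hW a b d hab hcd]
    obtain ⟨φ, hφ⟩ := hL
    -- The sign converts the representation `φ = ωY y' ·` into `φ = ωY · (-y')`.
    obtain ⟨y, hy⟩ : ∃ y, ∀ b, φ b = ωY b y := by
      refine ⟨-(ωY.toDual hYnd).symm φ, fun b => ?_⟩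
      rw [map_neg, hYalt.neg_eq, LinearMap.BilinForm.apply_toDual_symm_apply]
    refine ⟨y, (mem_iff_of_orthogonal_eq hf x y).2 ?_, (mem_iff_of_orthogonal_eq hg y z).2 ?_⟩
    · intro a b hab
      have h := LinearMap.congr_fun hφ (⟨(a, b), hab⟩, 0)
      simpa [T, L, hy] using h.symm
    · intro c d hcd
      have h := LinearMap.congr_fun hφ (0, ⟨(c, d), hcd⟩)
      simpa [T, L, hy] using h
  · rintro ⟨x, z⟩ ⟨y, hxy, hyz⟩ ⟨a, d⟩ ⟨b, hab, hbd⟩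
    have h₁ := (mem_iff_of_orthogonal_eq hf x y).1 hxy a b hab
    have h₂ := (mem_iff_of_orthogonal_eq hg y z).1 hyz b d hbd
    simp [diffForm, h₁, h₂]
end

section
/- Let X, Y, Z be symplectic vector spaces, f ⊆ X × Y a Lagrangian subspace for ω_X ⊖ ω_Y, and g ⊆ Y × Z a Lagrangian subspace for ω_Y ⊖ ω_Z. Consider in X × Y × Y × Z the subspaces T := {(x, y, y', z) : (x, y) ∈ f and (y', z) ∈ g} and D := {(x, y, y, z) : x ∈ X, y ∈ Y, z ∈ Z}. Then the pair (f, g) is monic, i.e. {y ∈ Y : (0, y) ∈ f and (y, 0) ∈ g} = {0}, if and only if the composition is transversal, i.e. T + D = X × Y × Y × Z. -/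
/-!
`D` is the kernel of the surjection `δ : ((x, y), (y', z)) ↦ y - y'`, so `T + D` is everything
exactly when `δ` maps `T = f × g` onto `Y`, i.e. when `W := π_Y f + π_Y g = Y`. Since `ω_Y` is
nondegenerate, this means that the `ω_Y`-orthogonal of `W` vanishes. Finally, `y` is orthogonal to
`π_Y f` iff `(0, y)` is orthogonal to `f`, i.e. lies in `f`, and likewise `y` is orthogonal to
`π_Y g` iff `(y, 0) ∈ g`; hence `W^⊥` is the subspace whose vanishing is monicity.
-/

open Module

/-- The "diagonal" subspace `D = {(x, y, y, z)}` of `(X × Y) × (Y × Z)`, i.e. the kernel of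
`((x, y), (y', z)) ↦ y - y'`. -/
noncomputable def midDiagonal (X Y Z : Type*) [AddCommGroup X] [Module ℝ X]
    [AddCommGroup Y] [Module ℝ Y] [AddCommGroup Z] [Module ℝ Z] :
    Submodule ℝ ((X × Y) × (Y × Z)) :=
  LinearMap.ker
    ((LinearMap.snd ℝ X Y).comp (LinearMap.fst ℝ (X × Y) (Y × Z)) -
      (LinearMap.fst ℝ Y Z).comp (LinearMap.snd ℝ (X × Y) (Y × Z)))

/-- For linear canonical relations `f ⊆ X × Y` and `g ⊆ Y × Z`, the pair `(f, g)` is monic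
(`{y : (0, y) ∈ f ∧ (y, 0) ∈ g} = {0}`) if and only if the composition is transversal
(`T + D = X × Y × Y × Z`, where `T = f × g` and `D = {(x, y, y, z)}`). -/
theorem monic_iff_transversal
    (X Y Z : Type*) [AddCommGroup X] [Module ℝ X] [FiniteDimensional ℝ X]
    [AddCommGroup Y] [Module ℝ Y] [FiniteDimensional ℝ Y]
    [AddCommGroup Z] [Module ℝ Z] [FiniteDimensional ℝ Z]
    (ωX : LinearMap.BilinForm ℝ X) (hXnd : ωX.Nondegenerate) (hXalt : ωX.IsAlt)
    (ωY : LinearMap.BilinForm ℝ Y) (hYnd : ωY.Nondegenerate) (hYalt : ωY.IsAlt)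
    (ωZ : LinearMap.BilinForm ℝ Z) (hZnd : ωZ.Nondegenerate) (hZalt : ωZ.IsAlt)
    (f : Submodule ℝ (X × Y)) (hf : (diffForm ωX ωY).orthogonal f = f)
    (g : Submodule ℝ (Y × Z)) (hg : (diffForm ωY ωZ).orthogonal g = g) :
    (∀ y : Y, ((0 : X), y) ∈ f → (y, (0 : Z)) ∈ g → y = 0) ↔
      f.prod g ⊔ midDiagonal X Y Z = ⊤ := by
  -- The subspace `W = π_Y f + π_Y g` of `Y`.
  set W : Submodule ℝ Y := f.map (LinearMap.snd ℝ X Y) ⊔ g.map (LinearMap.fst ℝ Y Z)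
  have memf : ∀ y : Y, ((0 : X), y) ∈ f ↔ ∀ p ∈ f, ωY p.2 y = 0 := by
    intro y
    conv_lhs => rw [← hf]
    simp [LinearMap.BilinForm.mem_orthogonal_iff, diffForm]
  have memg : ∀ y : Y, (y, (0 : Z)) ∈ g ↔ ∀ p ∈ g, ωY p.1 y = 0 := by
    intro y
    conv_lhs => rw [← hg]
    simp [LinearMap.BilinForm.mem_orthogonal_iff, diffForm]
  have memW : ∀ y : Y, y ∈ ωY.orthogonal W ↔ ((0 : X), y) ∈ f ∧ (y, (0 : Z)) ∈ g := by
    intro y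
    rw [memf, memg, LinearMap.BilinForm.mem_orthogonal_iff]
    constructor
    · intro h
      exact ⟨fun p hp => h _ (Submodule.mem_sup_left (Submodule.mem_map_of_mem hp)),
        fun p hp => h _ (Submodule.mem_sup_right (Submodule.mem_map_of_mem hp))⟩
    · rintro ⟨h₁, h₂⟩ n hn
      obtain ⟨_, ⟨p, hp, rfl⟩, _, ⟨q, hq, rfl⟩, rfl⟩ := Submodule.mem_sup.1 hn
      simp [h₁ p hp, h₂ q hq]
  have horth : ωY.orthogonal W = ⊥ ↔ W = ⊤ := by
    have hle := Submodule.finrank_le W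
    rw [← Submodule.finrank_eq_zero (R := ℝ), LinearMap.BilinForm.finrank_orthogonal hYnd W]
    constructor
    · intro h
      exact Submodule.eq_top_of_finrank_eq (by omega)
    · intro h
      rw [h, finrank_top, Nat.sub_self]
  have htrans : f.prod g ⊔ midDiagonal X Y Z = ⊤ ↔ W = ⊤ := by
    simp only [Submodule.eq_top_iff']
    constructor
    · intro h y
      obtain ⟨t, ht, d, hd, htd⟩ := Submodule.mem_sup.1 (h ((0, y), (0, 0)))
      have hd' : d.1.2 - d.2.1 = 0 := hd
      have h₁ : t.1.2 + d.1.2 = y := congrArg (fun v => v.1.2) htd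
      have h₂ : t.2.1 + d.2.1 = 0 := congrArg (fun v => v.2.1) htd
      have hy : y = t.1.2 - t.2.1 := by
        rw [← sub_zero y, ← h₁, ← h₂, sub_eq_zero.1 hd']
        abel
      rw [hy]
      exact W.sub_mem (Submodule.mem_sup_left (Submodule.mem_map_of_mem ht.1))
        (Submodule.mem_sup_right (Submodule.mem_map_of_mem ht.2))
    · intro h v
      obtain ⟨_, ⟨p, hp, rfl⟩, _, ⟨q, hq, rfl⟩, hpq⟩ := Submodule.mem_sup.1 (h (v.1.2 - v.2.1))
      have hpq' : p.2 + q.1 = v.1.2 - v.2.1 := hpq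
      -- `(p, -q) ∈ T` has the same image under `δ` as `v`, so the difference lies in `D`.
      refine Submodule.mem_sup.2 ⟨(p, -q), ⟨hp, g.neg_mem hq⟩, v - (p, -q), ?_, by abel⟩
      change (v.1.2 - p.2) - (v.2.1 - -q.1) = 0
      have : (v.1.2 - p.2) - (v.2.1 - -q.1) = (v.1.2 - v.2.1) - (p.2 + q.1) := by abel
      rw [this, hpq', sub_self]
  rw [htrans, ← horth, Submodule.eq_bot_iff]
  simp only [memW, and_imp]
end

section
/- Let V be a symplectic vector space and C a coisotropic subspace of V. Then there exists a unique alternating bilinear form ω̄ on the quotient C/Cᗮ such that ω̄(π(x), π(y)) = ω(x, y) for all x, y ∈ C, where π : C → C/Cᗮ is the quotient map, and ω̄ is nondegenerate; thus C/Cᗮ is again a symplectic vector space (the symplectic reduction of V by C). -/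
open Module

/-!
The restriction of `ω` to `C` vanishes as soon as one argument lies in `Cᗮ`, so it descends to
`C ⧸ Cᗮ` in both variables; surjectivity of the quotient map gives uniqueness. If the class of
`x ∈ C` pairs to zero with every class, then `ω(x, y) = 0` for all `y ∈ C`, i.e. `x ∈ Cᗮ`, and so
the class of `x` is zero: `Cᗮ ∩ C` is exactly the radical of `ω` restricted to `C`.
-/

/-- Symplectic reduction of a symplectic vector space `V` by a coisotropic subspace `C`:
there is a unique alternating bilinear form `ω̄` on the quotient `C / Cᗮ` compatible with `ω`
via the quotient map (`ω̄(π x, π y) = ω(x, y)` for `x, y ∈ C`), and any such form is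
nondegenerate, so `C / Cᗮ` is again a symplectic vector space. -/
theorem symplectic_reduction
    (V : Type*) [AddCommGroup V] [Module ℝ V] [FiniteDimensional ℝ V]
    (ω : LinearMap.BilinForm ℝ V) (hnd : ω.Nondegenerate) (halt : ω.IsAlt)
    (C : Submodule ℝ V) (hC : ω.orthogonal C ≤ C) :
    (∃! ωbar : LinearMap.BilinForm ℝ (C ⧸ (ω.orthogonal C).comap C.subtype),
      ωbar.IsAlt ∧ ∀ x y : C,
        ωbar (Submodule.Quotient.mk x) (Submodule.Quotient.mk y) = ω (x : V) (y : V)) ∧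
    (∀ ωbar : LinearMap.BilinForm ℝ (C ⧸ (ω.orthogonal C).comap C.subtype),
      ωbar.IsAlt →
      (∀ x y : C,
        ωbar (Submodule.Quotient.mk x) (Submodule.Quotient.mk y) = ω (x : V) (y : V)) →
      ωbar.Nondegenerate) := by
  have hmem : ∀ x : C, x ∈ (ω.orthogonal C).comap C.subtype ↔ ∀ y : C, ω (y : V) (x : V) = 0 := by
    intro x
    simp [LinearMap.BilinForm.mem_orthogonal_iff]
  have hswap : ∀ x y : V, ω x y = 0 → ω y x = 0 := fun x y h => halt.isRefl x y h
  refine ⟨?_, ?_⟩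
  · let K := (ω.orthogonal C).comap C.subtype
    -- `ω` descended in the second variable only
    let f : C →ₗ[ℝ] (C ⧸ K) →ₗ[ℝ] ℝ :=
      { toFun := fun x => K.liftQ ((ω (x : V)).comp C.subtype) fun y hy => (hmem y).1 hy x
        map_add' := fun x x' => by
          refine Submodule.linearMap_qext _ (LinearMap.ext fun y => ?_)
          exact LinearMap.congr_fun (ω.map_add (x : V) x') (y : V)
        map_smul' := fun c x => by
          refine Submodule.linearMap_qext _ (LinearMap.ext fun y => ?_)
          exact LinearMap.congr_fun (ω.map_smul c (x : V)) (y : V) }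
    have hf : K ≤ LinearMap.ker f := by
      intro x hx
      refine LinearMap.mem_ker.2 (Submodule.linearMap_qext _ (LinearMap.ext fun y => ?_))
      exact hswap _ _ ((hmem x).1 hx y)
    refine ⟨K.liftQ f hf, ⟨?_, fun x y => rfl⟩, ?_⟩
    · intro q
      obtain ⟨x, rfl⟩ := Submodule.Quotient.mk_surjective _ q
      exact halt (x : V)
    · rintro b ⟨-, hb⟩
      refine LinearMap.ext fun p => LinearMap.ext fun q => ?_
      obtain ⟨x, rfl⟩ := Submodule.Quotient.mk_surjective _ p
      obtain ⟨y, rfl⟩ := Submodule.Quotient.mk_surjective _ q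
      exact hb x y
  · intro b _ hb
    constructor
    · intro p hp
      obtain ⟨x, rfl⟩ := Submodule.Quotient.mk_surjective _ p
      refine (Submodule.Quotient.mk_eq_zero _).2 ((hmem x).2 fun y => hswap _ _ ?_)
      rw [← hb]
      exact hp _
    · intro p hp
      obtain ⟨x, rfl⟩ := Submodule.Quotient.mk_surjective _ p
      refine (Submodule.Quotient.mk_eq_zero _).2 ((hmem x).2 fun y => ?_)
      rw [← hb]
      exact hp _
end
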